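/- arXiv:2510.08370 — 5 statements merged into one kernel-verified Lean document; each statement's English description precedes it below -/
import Mathlib

section
/- Let X : ℝ² → ℝ² be positively homogeneous of degree zero (X(c·x) = X(x) for all real c > 0 and all x ≠ 0) and continuous on ℝ² ∖ {0}, and let m > 0 satisfy ‖X(x)‖ ≥ m for all x ≠ 0. Let T : ℝ² → ℝ² be a map such that (i) there is B ≥ 0 with ‖T(x) − x‖ ≤ B for all x ∈ ℝ², and (ii) there are constants C ≥ 0 and R > 0 with ‖T(x) − x − X(x)‖ ≤ C/‖x‖ whenever ‖x‖ ≥ R. Then for every positive integer k there exists ρ > 0 such that every k-periodic point z of T (i.e., every z with T^[k](z) = z) satisfies ‖z‖ ≤ ρ. -/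
open Function

/-!
A field `X` that is homogeneous of degree zero takes all its values on the unit sphere. Compactness
of the sphere makes `X` bounded, makes it bounded away from zero when it does not vanish, and makes
`X y - X x` tend to `0` when `x` escapes to infinity and `y - x` is negligible compared with `x`.
Near infinity the orbit of `x` under `T` thus moves by nearly the same vector `X x` at each step, so
`T^[k] x - x - k • X x` tends to `0` for every fixed `k`. At a `k`-periodic point this difference is
`-(k • X x)`, which stays away from `0`.
-/

open Asymptotics Bornology Filter Metric NormedSpace Topology Uniformity

lemma isEquivalent_of_sub_isBigO_one {ι E : Type*} [NormedAddCommGroup E] {l : Filter ι}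
    {u v : ι → E} (huv : (fun i => v i - u i) =O[l] (fun _ => (1 : ℝ)))
    (hu : Tendsto u l (cobounded E)) : v ~[l] u :=
  huv.trans_isLittleO (isLittleO_const_left.2 (.inr (tendsto_norm_atTop_iff_cobounded.2 hu)))

lemma tendsto_zero_cobounded_of_norm_le_div_norm {E F : Type*} [SeminormedAddCommGroup E]
    [SeminormedAddCommGroup F] {f : E → F} {C R : ℝ} (hf : ∀ x, R ≤ ‖x‖ → ‖f x‖ ≤ C / ‖x‖) :
    Tendsto f (cobounded E) (𝓝 0) :=
  squeeze_zero_norm' ((eventually_cobounded_le_norm R).mono hf)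
    (tendsto_norm_cobounded_atTop.const_div_atTop C)

section

variable {E F : Type*} [NormedAddCommGroup E] [NormedSpace ℝ E]

/-- Positive homogeneity of degree zero. No condition is imposed at the origin, so that a field
which is only meaningful away from the origin may take any value there. -/
def IsPosHomogeneousDegreeZero (X : E → F) : Prop :=
  ∀ c : ℝ, 0 < c → ∀ x : E, x ≠ 0 → X (c • x) = X x

namespace IsPosHomogeneousDegreeZero

variable {X : E → F}

lemma apply_normalize (hX : IsPosHomogeneousDegreeZero X) {x : E} (hx : x ≠ 0) :
    X (normalize x) = X x :=
  hX _ (inv_pos.2 (norm_pos_iff.2 hx)) x hx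

lemma image_compl_zero (hX : IsPosHomogeneousDegreeZero X) : X '' {0}ᶜ = X '' sphere 0 1 := by
  apply Set.Subset.antisymm
  · rintro _ ⟨x, hx, rfl⟩
    exact ⟨normalize x, by simpa using hx, hX.apply_normalize hx⟩
  · exact Set.image_mono fun x hx => ne_zero_of_mem_unit_sphere ⟨x, hx⟩

lemma isCompact_image_compl_zero [ProperSpace E] [TopologicalSpace F]
    (hX : IsPosHomogeneousDegreeZero X) (hcont : ContinuousOn X {0}ᶜ) :
    IsCompact (X '' {0}ᶜ) := by
  rw [hX.image_compl_zero]
  exact (isCompact_sphere 0 1).image_of_continuousOn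
    (hcont.mono fun x hx => ne_zero_of_mem_unit_sphere ⟨x, hx⟩)

lemma tendsto_uniformity_of_isEquivalent [ProperSpace E] [UniformSpace F] {ι : Type*}
    {l : Filter ι} {u v : ι → E} (hX : IsPosHomogeneousDegreeZero X)
    (hcont : ContinuousOn X {0}ᶜ) (huv : v ~[l] u) (hu : ∀ᶠ i in l, u i ≠ 0) :
    Tendsto (fun i => (X (u i), X (v i))) l (𝓤 F) := by
  have hscaled : Tendsto (fun i => (normalize (u i), ‖u i‖⁻¹ • v i)) l (𝓤 E) := by
    rw [uniformity_eq_comap_nhds_zero E, tendsto_comap_iff]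
    simpa [Function.comp_def, NormedSpace.normalize, smul_sub] using
      huv.isLittleO.norm_right.tendsto_inv_smul_nhds_zero
  have hv : ∀ᶠ i in l, v i ≠ 0 := by
    filter_upwards [huv.isBigO_symm.eq_zero_imp, hu] with i hvu hui hvi using hui (hvu hvi)
  intro r hr
  have hunif := (isCompact_sphere (0 : E) 1).uniformContinuousAt_of_continuousAt X
    (fun x hx => hcont.continuousAt
      (isOpen_compl_singleton.mem_nhds (ne_zero_of_mem_unit_sphere ⟨x, hx⟩))) hr
  have hclose : ∀ᶠ i in l, normalize (u i) ∈ sphere (0 : E) 1 →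
      (X (normalize (u i)), X (‖u i‖⁻¹ • v i)) ∈ r := hscaled hunif
  change ∀ᶠ i in l, (X (u i), X (v i)) ∈ r
  filter_upwards [hclose, hu, hv] with i hi hui hvi
  rw [hX.apply_normalize hui, hX _ (inv_pos.2 (norm_pos_iff.2 hui)) _ hvi] at hi
  exact hi (by simpa using hui)

lemma tendsto_sub_of_isEquivalent [ProperSpace E] [SeminormedAddCommGroup F] {ι : Type*}
    {l : Filter ι} {u v : ι → E} (hX : IsPosHomogeneousDegreeZero X)
    (hcont : ContinuousOn X {0}ᶜ) (huv : v ~[l] u) (hu : ∀ᶠ i in l, u i ≠ 0) :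
    Tendsto (fun i => X (v i) - X (u i)) l (𝓝 0) := by
  have := hX.tendsto_uniformity_of_isEquivalent hcont huv hu
  rwa [uniformity_eq_comap_nhds_zero F, tendsto_comap_iff] at this

lemma isBigO_one [ProperSpace E] [SeminormedAddCommGroup F]
    (hX : IsPosHomogeneousDegreeZero X) (hcont : ContinuousOn X {0}ᶜ) :
    X =O[cobounded E] (fun _ => (1 : ℝ)) := by
  obtain ⟨M, hM⟩ := (hX.isCompact_image_compl_zero hcont).isBounded.exists_norm_le
  refine IsBigO.of_bound M ?_
  filter_upwards [eventually_ne_cobounded 0] with x hx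
  simpa using hM (X x) ⟨x, hx, rfl⟩

variable [ProperSpace E] {X Y S T : E → E}

lemma tendsto_comp_sub_sub_add (hX : IsPosHomogeneousDegreeZero X)
    (hcont : ContinuousOn X {0}ᶜ) (hY : Y =O[cobounded E] (fun _ => (1 : ℝ)))
    (hT : Tendsto (fun x => T x - x - X x) (cobounded E) (𝓝 0))
    (hS : Tendsto (fun x => S x - x - Y x) (cobounded E) (𝓝 0)) :
    Tendsto (fun x => T (S x) - x - (X x + Y x)) (cobounded E) (𝓝 0) := by
  have hS_id : S ~[cobounded E] id := by
    refine isEquivalent_of_sub_isBigO_one ?_ tendsto_id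
    simpa using (hS.isBigO_one ℝ).add hY
  have hS_cobounded : Tendsto S (cobounded E) (cobounded E) :=
    tendsto_norm_atTop_iff_cobounded.1
      (hS_id.isTheta.tendsto_norm_atTop_iff.2 tendsto_norm_cobounded_atTop)
  have hXS : Tendsto (fun x => X (S x) - X x) (cobounded E) (𝓝 0) :=
    hX.tendsto_sub_of_isEquivalent hcont hS_id (eventually_ne_cobounded 0)
  have hsum := ((hT.comp hS_cobounded).add hXS).add hS
  simp only [add_zero] at hsum
  refine hsum.congr fun x => ?_
  simp only [Function.comp_apply]
  abel

lemma tendsto_iterate_sub_sub_nsmul (hX : IsPosHomogeneousDegreeZero X)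
    (hcont : ContinuousOn X {0}ᶜ) (hT : Tendsto (fun x => T x - x - X x) (cobounded E) (𝓝 0))
    (k : ℕ) : Tendsto (fun x => T^[k] x - x - k • X x) (cobounded E) (𝓝 0) := by
  induction k with
  | zero => simp [tendsto_const_nhds]
  | succ k ih =>
    have hkX : (fun x => k • X x) =O[cobounded E] (fun _ => (1 : ℝ)) := by
      simpa only [Pi.smul_def, Nat.cast_smul_eq_nsmul] using
        (hX.isBigO_one hcont).const_smul_left (k : ℝ)
    simpa only [iterate_succ_apply', succ_nsmul'] using
      hX.tendsto_comp_sub_sub_add hcont hkX hT ih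

end IsPosHomogeneousDegreeZero

end

theorem distant_periodic_points_have_large_periods_general {E : Type*} [NormedAddCommGroup E]
    [NormedSpace ℝ E] [ProperSpace E] {X T : E → E} (hX : IsPosHomogeneousDegreeZero X)
    (hcont : ContinuousOn X {0}ᶜ) (hne : ∀ x ≠ 0, X x ≠ 0)
    (hT : Tendsto (fun x => T x - x - X x) (cobounded E) (𝓝 0)) {k : ℕ} (hk : k ≠ 0) :
    IsBounded (ptsOfPeriod T k) := by
  have hzero : (0 : E) ∉ X '' {0}ᶜ := fun ⟨x, hx, hXx⟩ => hne x hx hXx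
  have hX_away : ∀ᶠ y in 𝓝 (0 : E), y ∉ X '' {0}ᶜ :=
    (hX.isCompact_image_compl_zero hcont).isClosed.isOpen_compl.mem_nhds hzero
  have hmean : Tendsto (fun x => -(k : ℝ)⁻¹ • (T^[k] x - x - k • X x)) (cobounded E) (𝓝 0) := by
    simpa using (hX.tendsto_iterate_sub_sub_nsmul hcont hT k).const_smul (-(k : ℝ)⁻¹)
  rw [isBounded_def]
  filter_upwards [hmean.eventually hX_away, eventually_ne_cobounded 0] with x hx hx0 hper
  have hper : T^[k] x = x := hper
  refine hx ⟨x, hx0, ?_⟩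
  simp [hper, ← Nat.cast_smul_eq_nsmul ℝ, smul_smul, hk]

/-- If `X` is positively homogeneous of degree zero, continuous away from the origin, and
bounded below in norm by `m > 0` away from the origin, and `T` has uniformly bounded
displacement and satisfies `‖T x - x - X x‖ ≤ C/‖x‖` far from the origin, then for every
positive integer `k` all `k`-periodic points of `T` lie in a bounded disc. -/
theorem distant_periodic_points_have_large_periods
    (X T : EuclideanSpace ℝ (Fin 2) → EuclideanSpace ℝ (Fin 2))
    (hhom : ∀ c : ℝ, 0 < c → ∀ x : EuclideanSpace ℝ (Fin 2), x ≠ 0 → X (c • x) = X x)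
    (hcont : ContinuousOn X {(0 : EuclideanSpace ℝ (Fin 2))}ᶜ)
    (m : ℝ) (hm : 0 < m)
    (hlow : ∀ x : EuclideanSpace ℝ (Fin 2), x ≠ 0 → m ≤ ‖X x‖)
    (B : ℝ) (hB : 0 ≤ B) (hbnd : ∀ x, ‖T x - x‖ ≤ B)
    (C R : ℝ) (hC : 0 ≤ C) (hR : 0 < R)
    (happ : ∀ x, R ≤ ‖x‖ → ‖T x - x - X x‖ ≤ C / ‖x‖)
    (k : ℕ) (hk : 0 < k) :
    ∃ ρ > (0 : ℝ), ∀ z : EuclideanSpace ℝ (Fin 2), T^[k] z = z → ‖z‖ ≤ ρ :=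
  (distant_periodic_points_have_large_periods_general hhom hcont
    (fun x hx => norm_pos_iff.1 (hm.trans_le (hlow x hx)))
    (tendsto_zero_cobounded_of_norm_le_div_norm happ) hk.ne').exists_pos_norm_le
end

section
/- Let θ, a, b : ℝ → ℝ be functions and let s, k ∈ ℝ. Assume θ has derivative k at s, a has derivative cos(θ(s)) at s, b has derivative sin(θ(s)) at s, and sin(θ(s)) ≠ 0. Define λ(x) = −b(x)/sin(θ(x)) and H(x) = a(x) + λ(x)·(1 + cos(θ(x))). Then H has derivative −λ(s)·k·(1 + cos(θ(s)))/sin(θ(s)) − 1 at s; equivalently, writing φ = θ(s), H′(s) = −λ(s)·k·cot(φ/2) − 1. -/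
open Real

/-!
Since `(1 + cos φ) / sin φ = cot (φ / 2)`, the generating function is `H = a - b * cot (θ / 2)`.
Moving the point of tangency along its tangent line contributes
`cos θ - sin θ * cot (θ / 2) = -1` to `H'`, and turning that line contributes
`b * k / (1 - cos θ) = -(-b / sin θ) * k * cot (θ / 2)`.
-/

/-- Where `sin x = 0`, both sides are `0`, since `y / 0 = 0`. -/
theorem one_add_cos_div_sin_eq_cot_half (x : ℝ) : (1 + cos x) / sin x = cot (x / 2) := by
  obtain ⟨y, rfl⟩ : ∃ y, x = 2 * y := ⟨x / 2, by ring⟩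
  rw [mul_div_cancel_left₀ y two_ne_zero, cos_two_mul, sin_two_mul, cot_eq_cos_div_sin]
  by_cases hcos : cos y = 0
  · simp [hcos]
  · field_simp
    ring

theorem sin_mul_cot_half {x : ℝ} (hx : sin (x / 2) ≠ 0) :
    sin x * cot (x / 2) = 1 + cos x := by
  obtain ⟨y, rfl⟩ : ∃ y, x = 2 * y := ⟨x / 2, by ring⟩
  rw [mul_div_cancel_left₀ y two_ne_zero] at hx ⊢
  rw [cos_two_mul, sin_two_mul, cot_eq_cos_div_sin]
  field_simp
  ring

theorem sin_half_ne_zero {x : ℝ} (hx : sin x ≠ 0) : sin (x / 2) ≠ 0 := by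
  rw [← mul_div_cancel₀ x two_ne_zero, sin_two_mul] at hx
  exact right_ne_zero_of_mul (left_ne_zero_of_mul hx)

theorem inv_one_sub_cos {x : ℝ} (hx : sin x ≠ 0) :
    (1 - cos x)⁻¹ = (1 + cos x) / sin x ^ 2 := by
  have hprod : (1 + cos x) * (1 - cos x) = sin x ^ 2 := by
    rw [sin_sq]
    ring
  have hcos : 1 + cos x ≠ 0 := left_ne_zero_of_mul (hprod ▸ pow_ne_zero 2 hx)
  rw [← hprod, div_mul_cancel_left₀ hcos]

theorem hasDerivAt_cot {x : ℝ} (hx : sin x ≠ 0) : HasDerivAt cot (-1 / sin x ^ 2) x := by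
  have hcot : cot = fun y => cos y / sin y := funext cot_eq_cos_div_sin
  rw [hcot]
  refine ((hasDerivAt_cos x).fun_div (hasDerivAt_sin x) hx).congr_deriv ?_
  congr 1
  linear_combination -sin_sq_add_cos_sq x

theorem hasDerivAt_cot_half {x : ℝ} (hx : sin (x / 2) ≠ 0) :
    HasDerivAt (fun y => cot (y / 2)) (-1 / (1 - cos x)) x := by
  have hsin : 1 - cos x = 2 * sin (x / 2) ^ 2 := by
    rw [sin_sq_eq_half_sub, mul_div_cancel₀ x two_ne_zero]
    ring
  refine ((hasDerivAt_cot hx).comp x ((hasDerivAt_id x).div_const 2)).congr_deriv ?_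
  rw [hsin]
  field_simp

theorem hasDerivAt_sub_mul_cot_half {θ a b : ℝ → ℝ} {s k : ℝ} (hθ : HasDerivAt θ k s)
    (ha : HasDerivAt a (cos (θ s)) s) (hb : HasDerivAt b (sin (θ s)) s)
    (hs : sin (θ s / 2) ≠ 0) :
    HasDerivAt (fun x => a x - b x * cot (θ x / 2)) (b s * k / (1 - cos (θ s)) - 1) s := by
  have hcot := (hasDerivAt_cot_half hs).comp s hθ
  refine (ha.sub (hb.mul hcot)).congr_deriv ?_
  simp only [Function.comp_apply]
  rw [sin_mul_cot_half hs]
  ring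

/-- The derivative of the generating function of the outer length billiard:
with `λ(x) = -b(x)/sin(θ(x))` (the length `|Ax|` of the tangent segment) and
`H(x) = a(x) + λ(x)·(1 + cos(θ(x)))` (the sum `|xA| + |Ax'|`), one has
`H′(s) = -λ(s)·k·(1 + cos θ(s))/sin θ(s) - 1 = -λ(s)·k·cot(θ(s)/2) - 1`. -/
theorem deriv_generating_function
    (θ a b : ℝ → ℝ) (s k : ℝ)
    (hθ : HasDerivAt θ k s)
    (ha : HasDerivAt a (Real.cos (θ s)) s)
    (hb : HasDerivAt b (Real.sin (θ s)) s)
    (hs : Real.sin (θ s) ≠ 0) :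
    HasDerivAt (fun x => a x + (-b x / Real.sin (θ x)) * (1 + Real.cos (θ x)))
      (-(-b s / Real.sin (θ s)) * k * (1 + Real.cos (θ s)) / Real.sin (θ s) - 1) s := by
  have hH : (fun x => a x + (-b x / sin (θ x)) * (1 + cos (θ x))) =
      fun x => a x - b x * cot (θ x / 2) := by
    funext x
    rw [← one_add_cos_div_sin_eq_cot_half]
    ring
  rw [hH]
  refine (hasDerivAt_sub_mul_cot_half hθ ha hb (sin_half_ne_zero hs)).congr_deriv ?_
  rw [div_eq_mul_inv, inv_one_sub_cos hs]
  ring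
end

section
/- Let m > 0 and let θ : ℝ → ℝ be differentiable with θ′(s) ≥ m for all s. Let γ : ℝ → ℝ² be a curve with derivative γ′(s) = (cos θ(s), sin θ(s)) for all s (so γ is parametrized by arc length with curvature θ′ ≥ m). Let s₁ < s₂ be parameters with θ(s₂) − θ(s₁) < π/2, and suppose a point X ∈ ℝ² satisfies X = γ(s₁) + t·(cos θ(s₁), sin θ(s₁)) for some t > 0 and X = γ(s₂) − u·(cos θ(s₂), sin θ(s₂)) for some u > 0. Then ‖X − γ(s₁)‖ ≤ (θ(s₂) − θ(s₁))/m. -/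
open Real

/-!
The angle between the two tangent segments at `X` is not acute, so in the triangle
`γ s₁, X, γ s₂` the side opposite to it, the chord from `γ s₁` to `γ s₂`, is at least as long as
the tangent segment. The chord is no longer than the arc, whose length is `s₂ - s₁`, and as the
tangent turns at rate at least `m`, this is at most `(θ s₂ - θ s₁) / m`.
-/

section InnerProductSpace

variable {E : Type*} [NormedAddCommGroup E] [InnerProductSpace ℝ E]

theorem norm_le_norm_add_of_inner_nonneg {x y : E} (h : 0 ≤ inner ℝ x y) : ‖x‖ ≤ ‖x + y‖ := by
  refine le_of_sq_le_sq ?_ (norm_nonneg _)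
  rw [norm_add_sq_real]
  linarith [sq_nonneg ‖y‖]

theorem norm_sub_le_of_norm_deriv_le_of_inner_nonneg {γ γ' : ℝ → E} {X : E} {C a b : ℝ}
    (hab : a ≤ b) (hγ : ∀ s ∈ Set.Icc a b, HasDerivWithinAt γ (γ' s) (Set.Icc a b) s)
    (hγ' : ∀ s ∈ Set.Ico a b, ‖γ' s‖ ≤ C) (hX : 0 ≤ inner ℝ (X - γ a) (γ b - X)) :
    ‖X - γ a‖ ≤ C * (b - a) :=
  calc ‖X - γ a‖ ≤ ‖X - γ a + (γ b - X)‖ := norm_le_norm_add_of_inner_nonneg hX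
    _ = ‖γ b - γ a‖ := by rw [sub_add_sub_cancel']
    _ ≤ C * (b - a) :=
      norm_image_sub_le_of_norm_deriv_le_segment' hγ hγ' b (Set.right_mem_Icc.mpr hab)

end InnerProductSpace

/-- The unit vector of the Euclidean plane at angle `α` to the first coordinate axis; the tangent
vector of a unit-speed curve with tangent angle `α`. It is built with `EuclideanSpace.equiv` so
that it carries the Euclidean norm, not the sup norm of `Fin 2 → ℝ`. -/
noncomputable def unitVector (α : ℝ) : EuclideanSpace ℝ (Fin 2) :=
  (EuclideanSpace.equiv (Fin 2) ℝ).symm ![cos α, sin α]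

theorem inner_unitVector (α β : ℝ) : inner ℝ (unitVector α) (unitVector β) = cos (β - α) := by
  simp [unitVector, PiLp.inner_apply, Fin.sum_univ_two, cos_sub]

theorem norm_unitVector (α : ℝ) : ‖unitVector α‖ = 1 := by
  rw [norm_eq_sqrt_real_inner, inner_unitVector, sub_self, cos_zero, sqrt_one]

theorem tangent_segment_length_le_general {m s₁ s₂ t u : ℝ} {θ : ℝ → ℝ}
    {γ : ℝ → EuclideanSpace ℝ (Fin 2)} {X : EuclideanSpace ℝ (Fin 2)} (hm : 0 < m) (hs : s₁ ≤ s₂)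
    (hθ : DifferentiableOn ℝ θ (Set.Icc s₁ s₂)) (hθ' : ∀ s ∈ Set.Ioo s₁ s₂, m ≤ deriv θ s)
    (hγ : ∀ s ∈ Set.Icc s₁ s₂, HasDerivWithinAt γ (unitVector (θ s)) (Set.Icc s₁ s₂) s)
    (hang : θ s₂ - θ s₁ ≤ π / 2) (ht : 0 ≤ t) (hu : 0 ≤ u)
    (hX₁ : X = γ s₁ + t • unitVector (θ s₁)) (hX₂ : X = γ s₂ - u • unitVector (θ s₂)) :
    ‖X - γ s₁‖ ≤ (θ s₂ - θ s₁) / m := by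
  have hturn : m * (s₂ - s₁) ≤ θ s₂ - θ s₁ :=
    (convex_Icc s₁ s₂).mul_sub_le_image_sub_of_le_deriv hθ.continuousOn
      (hθ.mono interior_subset) (by rwa [interior_Icc])
      s₁ (Set.left_mem_Icc.mpr hs) s₂ (Set.right_mem_Icc.mpr hs) hs
  have hcos : 0 ≤ cos (θ s₂ - θ s₁) :=
    cos_nonneg_of_neg_pi_div_two_le_of_le
      (by linarith [pi_pos, mul_nonneg hm.le (sub_nonneg.mpr hs)]) hang
  have hinner : 0 ≤ inner ℝ (X - γ s₁) (γ s₂ - X) := by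
    have hleft : X - γ s₁ = t • unitVector (θ s₁) := sub_eq_of_eq_add' hX₁
    have hright : γ s₂ - X = u • unitVector (θ s₂) := by rw [hX₂, sub_sub_cancel]
    rw [hleft, hright, real_inner_smul_left, real_inner_smul_right, inner_unitVector]
    positivity
  calc ‖X - γ s₁‖ ≤ 1 * (s₂ - s₁) :=
      norm_sub_le_of_norm_deriv_le_of_inner_nonneg hs hγ
        (fun s _ ↦ (norm_unitVector (θ s)).le) hinner
    _ ≤ (θ s₂ - θ s₁) / m := by rwa [one_mul, le_div_iff₀' hm]

/-- If `γ` is an arc-length-parametrized curve with tangent direction `(cos θ, sin θ)` and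
curvature `θ′ ≥ m > 0`, and a point `X` is both on the forward tangent ray at `γ(s₁)` and
on the backward tangent ray at `γ(s₂)`, with total turning `θ(s₂) - θ(s₁) < π/2`, then the
tangent segment from `γ(s₁)` to `X` has length at most `(θ(s₂) - θ(s₁))/m`. -/
theorem tangent_segment_length_le
    (m : ℝ) (hm : 0 < m) (θ : ℝ → ℝ) (hθ : Differentiable ℝ θ)
    (hθ' : ∀ s, m ≤ deriv θ s)
    (γ : ℝ → EuclideanSpace ℝ (Fin 2))
    (hγ : ∀ s, HasDerivAt γ
      ((EuclideanSpace.equiv (Fin 2) ℝ).symm ![Real.cos (θ s), Real.sin (θ s)]) s)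
    (s₁ s₂ : ℝ) (hs : s₁ < s₂) (hang : θ s₂ - θ s₁ < π / 2)
    (X : EuclideanSpace ℝ (Fin 2)) (t u : ℝ) (ht : 0 < t) (hu : 0 < u)
    (hX1 : X = γ s₁ +
      t • (EuclideanSpace.equiv (Fin 2) ℝ).symm ![Real.cos (θ s₁), Real.sin (θ s₁)])
    (hX2 : X = γ s₂ -
      u • (EuclideanSpace.equiv (Fin 2) ℝ).symm ![Real.cos (θ s₂), Real.sin (θ s₂)]) :
    ‖X - γ s₁‖ ≤ (θ s₂ - θ s₁) / m :=
  tangent_segment_length_le_general hm hs.le hθ.differentiableOn (fun s _ ↦ hθ' s)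
    (fun s _ ↦ (hγ s).hasDerivWithinAt) hang.le ht.le hu.le hX1 hX2
end

section
/- Let a, b, c, d, y, z, w be points of the Euclidean plane and let C ≥ 0. Assume: dist(a,b) ≤ C and dist(c,d) ≤ C; dist(y,a) + dist(y,c) = dist(z,a) + dist(z,c); dist(y,b) + dist(y,d) = dist(w,b) + dist(w,d); dist(z,a) ≤ dist(w,a); and dist(z,w) = dist(w,c) − dist(z,c). Then dist(z,w) ≤ 4C. -/
/-!
The hypotheses on `z` and `w` bound `dist z w` by the growth of the `(a, c)`-focal sum from `z`
to `w`, hence from `y` to `w`. The `(b, d)`-focal sum does not grow from `y` to `w`, and exchanging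
one pair of foci for the other costs at most `dist a b + dist c d` at each of these two points.
-/

section FocalSum

variable {X : Type*} [PseudoMetricSpace X]

/-- The sum of the distances from `x` to the foci `a` and `c`. Its level sets are the ellipses with
these foci, and comparing its values says which of two points lies on the larger confocal ellipse.
-/
def focalSum (a c x : X) : ℝ := dist x a + dist x c

theorem abs_focalSum_sub_focalSum_le (a b c d x : X) :
    |focalSum a c x - focalSum b d x| ≤ dist a b + dist c d :=
  dist_add_add_le_of_le (dist_dist_dist_le_right x a b) (dist_dist_dist_le_right x c d)

theorem focalSum_le_add_of_focalSum_le {b d y w : X} (h : focalSum b d w ≤ focalSum b d y)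
    (a c : X) : focalSum a c w ≤ focalSum a c y + 2 * (dist a b + dist c d) := by
  have change_foci_at_w := (abs_le.mp (abs_focalSum_sub_focalSum_le a b c d w)).2
  have change_foci_at_y := (abs_le.mp (abs_focalSum_sub_focalSum_le a b c d y)).1
  linarith

theorem two_ellipses_estimate_general {a b c d y z w : X}
    (hyz : focalSum a c y ≤ focalSum a c z) (hwy : focalSum b d w ≤ focalSum b d y)
    (hza : dist z a ≤ dist w a) (hzw : dist z w ≤ dist w c - dist z c) :
    dist z w ≤ 2 * (dist a b + dist c d) :=
  calc
    dist z w ≤ focalSum a c w - focalSum a c z := by unfold focalSum; linarith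
    _ ≤ focalSum a c w - focalSum a c y := sub_le_sub_left hyz _
    _ ≤ 2 * (dist a b + dist c d) := sub_le_iff_le_add'.mpr (focalSum_le_add_of_focalSum_le hwy a c)

end FocalSum

/-- The metric core of the two-ellipse comparison lemma: if `y, z` lie on a common ellipse
with foci `a, c`, and `y, w` lie on a common ellipse with foci `b, d`, the foci pairs are
`C`-close, `dist z a ≤ dist w a`, and `z` lies between `y` and `w` on the ray through `c`
(so that `dist z w = dist w c - dist z c`), then `dist z w ≤ 4C`. -/
theorem two_ellipses_estimate
    (a b c d y z w : EuclideanSpace ℝ (Fin 2)) (C : ℝ) (hC : 0 ≤ C)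
    (hab : dist a b ≤ C) (hcd : dist c d ≤ C)
    (hyz : dist y a + dist y c = dist z a + dist z c)
    (hyw : dist y b + dist y d = dist w b + dist w d)
    (hza : dist z a ≤ dist w a)
    (hzw : dist z w = dist w c - dist z c) :
    dist z w ≤ 4 * C := by
  linarith [two_ellipses_estimate_general hyz.le hyw.ge hza hzw.le]
end

section
/- Let Y : ℝ² → ℝ² be positively homogeneous of degree zero (Y(c·x) = Y(x) for all real c > 0 and all x ≠ 0) and continuously differentiable on ℝ² ∖ {0}, and let φ be a global flow of Y on ℝ² ∖ {0}: φ(0, x) = x for all x ≠ 0, and for every x ≠ 0 the curve t ↦ φ(t, x) avoids 0 and satisfies d/dt φ(t, x) = Y(φ(t, x)) for all t ∈ ℝ. Then there exist constants C ≥ 0 and δ > 0 such that for every x with ‖x‖ ≥ 1/δ one has ‖φ(1, x) − x − Y(x)‖ ≤ C/‖x‖. -/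
/-!
A vector field `Y` that is positively homogeneous of degree zero is the radial extension of its
restriction to the unit sphere. Radial projection distorts distances near `x` by a factor of at most
`2 / ‖x‖`, so a Lipschitz constant `K` of `Y` on the sphere gives
`‖Y y - Y x‖ ≤ (2 * K / ‖x‖) * ‖y - x‖`, while `Y` is bounded by its bound `M` on the sphere. An
orbit started at `x` is therefore at distance at most `M * t` from `x` at time `t`, its velocity
differs from `Y x` by at most `2 * K * M * t / ‖x‖`, and integrating over `[0, 1]` gives the error
`K * M / ‖x‖`.
-/

section

open Set Metric NormedSpace
open scoped NNReal

variable {E F : Type*} [NormedAddCommGroup E] [NormedSpace ℝ E]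

theorem norm_normalize_sub_normalize_le {x : E} (hx : x ≠ 0) (y : E) :
    ‖normalize y - normalize x‖ ≤ 2 / ‖x‖ * ‖y - x‖ := by
  have hpos : 0 < ‖x‖ := norm_pos_iff.2 hx
  have hnorm : ‖normalize y‖ ≤ 1 := by
    rcases eq_or_ne y 0 with rfl | hy
    · simp
    · exact (norm_normalize hy).le
  have hdecomp : ‖x‖ • (normalize y - normalize x) =
      (y - x) - (‖y‖ - ‖x‖) • normalize y := by
    rw [smul_sub, sub_smul, norm_smul_normalize, norm_smul_normalize]
    abel
  rw [div_mul_eq_mul_div, le_div_iff₀' hpos]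
  calc ‖x‖ * ‖normalize y - normalize x‖
      = ‖(y - x) - (‖y‖ - ‖x‖) • normalize y‖ := by rw [← hdecomp, norm_smul, norm_norm]
    _ ≤ ‖y - x‖ + |‖y‖ - ‖x‖| * ‖normalize y‖ := by
        simpa only [norm_smul, Real.norm_eq_abs] using
          norm_sub_le (y - x) ((‖y‖ - ‖x‖) • normalize y)
    _ ≤ ‖y - x‖ + ‖y - x‖ * 1 := by gcongr; exact abs_norm_sub_norm_le y x
    _ = 2 * ‖y - x‖ := by ring

theorem isBounded_image_of_lipschitzOnWith {α β : Type*} [PseudoMetricSpace α]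
    [PseudoMetricSpace β] {f : α → β} {K : ℝ≥0} {s : Set α} (hf : LipschitzOnWith K f s)
    (hs : Bornology.IsBounded s) : Bornology.IsBounded (f '' s) := by
  have : BoundedSpace s := boundedSpace_val_set_iff.2 hs
  simpa only [image_univ, range_domRestrict] using hf.to_restrict.isBounded_image (.all univ)

theorem exists_lipschitzOnWith_of_contDiffOn_of_isCompact [NormedAddCommGroup F]
    [NormedSpace ℝ F] {f : E → F} {s t : Set E} (hf : ContDiffOn ℝ 1 f s) (hs : IsOpen s)
    (ht : IsCompact t) (hts : t ⊆ s) : ∃ K : ℝ≥0, LipschitzOnWith K f t := by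
  have hloc : LocallyLipschitzOn t f := fun x hx ↦ by
    obtain ⟨K, u, hu, hK⟩ :=
      (hf.contDiffAt (hs.mem_nhds (hts hx))).exists_lipschitzOnWith
    exact ⟨K, u, mem_nhdsWithin_of_mem_nhds hu, hK⟩
  exact hloc.exists_lipschitzOnWith_of_compact ht

theorem norm_euler_step_error_le {Y : E → E} {γ : ℝ → E} {a b L M : ℝ}
    (hab : a ≤ b) (hL : 0 ≤ L) (hγ : IsIntegralCurveOn γ (fun _ ↦ Y) (Icc a b))
    (hbound : ∀ t ∈ Icc a b, ‖Y (γ t)‖ ≤ M)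
    (hlip : ∀ t ∈ Icc a b, ‖Y (γ t) - Y (γ a)‖ ≤ L * ‖γ t - γ a‖) :
    ‖γ b - γ a - (b - a) • Y (γ a)‖ ≤ L * M * (b - a) ^ 2 / 2 := by
  have hdist : ∀ t ∈ Icc a b, ‖γ t - γ a‖ ≤ M * (t - a) :=
    norm_image_sub_le_of_norm_deriv_le_segment' hγ fun t ht ↦ hbound t (Ico_subset_Icc_self ht)
  have hvelocity : ∀ t ∈ Icc a b, ‖Y (γ t) - Y (γ a)‖ ≤ L * M * (t - a) := fun t ht ↦
    calc ‖Y (γ t) - Y (γ a)‖ ≤ L * ‖γ t - γ a‖ := hlip t ht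
      _ ≤ L * (M * (t - a)) := by gcongr; exact hdist t ht
      _ = L * M * (t - a) := by ring
  have herror : ∀ t ∈ Icc a b, HasDerivWithinAt (fun s ↦ γ s - γ a - (s - a) • Y (γ a))
      (Y (γ t) - Y (γ a)) (Icc a b) t := fun t ht ↦ by
    simpa only [one_smul, id_eq] using ((hγ t ht).sub_const (γ a)).fun_sub
      (((hasDerivWithinAt_id t _).sub_const a).smul_const (Y (γ a)))
  have hquadratic (t : ℝ) : HasDerivAt (fun s ↦ L * M * (s - a) ^ 2 / 2) (L * M * (t - a)) t := by
    convert! ((((hasDerivAt_id t).sub_const a).pow 2).const_mul (L * M)).div_const 2 using 1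
    simp only [id_eq]
    ring
  exact image_norm_le_of_norm_deriv_right_le_deriv_boundary'
    (fun t ht ↦ (herror t ht).continuousWithinAt)
    (fun t ht ↦ (herror t (Ico_subset_Icc_self ht)).mono_of_mem_nhdsWithin
      (Icc_mem_nhdsGE_of_mem ht))
    (by simp)
    (fun t _ ↦ (hquadratic t).continuousAt.continuousWithinAt)
    (fun t _ ↦ (hquadratic t).hasDerivWithinAt)
    (fun t ht ↦ hvelocity t (Ico_subset_Icc_self ht)) (right_mem_Icc.2 hab)

/-- Positive homogeneity of degree zero, for maps defined away from the origin: the value at `0` is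
unconstrained. -/
def IsPosHomogeneousZero (Y : E → F) : Prop :=
  ∀ c : ℝ, 0 < c → ∀ x : E, x ≠ 0 → Y (c • x) = Y x

namespace IsPosHomogeneousZero

variable {Y : E → F}

theorem apply_normalize (hY : IsPosHomogeneousZero Y) {x : E} (hx : x ≠ 0) :
    Y (normalize x) = Y x :=
  hY ‖x‖⁻¹ (inv_pos.2 (norm_pos_iff.2 hx)) x hx

variable [NormedAddCommGroup F]

theorem exists_norm_le (hY : IsPosHomogeneousZero Y)
    (hbdd : Bornology.IsBounded (Y '' sphere 0 1)) : ∃ M ≥ (0 : ℝ), ∀ x ≠ 0, ‖Y x‖ ≤ M := by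
  obtain ⟨M, hM0, hM⟩ := hbdd.exists_pos_norm_le
  refine ⟨M, hM0.le, fun x hx ↦ ?_⟩
  rw [← hY.apply_normalize hx]
  exact hM _ (mem_image_of_mem Y (mem_sphere_zero_iff_norm.2 (norm_normalize hx)))

theorem norm_sub_le {K : ℝ≥0} (hY : IsPosHomogeneousZero Y)
    (hlip : LipschitzOnWith K Y (sphere 0 1)) {x y : E} (hx : x ≠ 0) (hy : y ≠ 0) :
    ‖Y y - Y x‖ ≤ 2 * K / ‖x‖ * ‖y - x‖ :=
  calc ‖Y y - Y x‖ = ‖Y (normalize y) - Y (normalize x)‖ := by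
        rw [hY.apply_normalize hx, hY.apply_normalize hy]
    _ ≤ K * ‖normalize y - normalize x‖ :=
        hlip.norm_sub_le (mem_sphere_zero_iff_norm.2 (norm_normalize hy))
          (mem_sphere_zero_iff_norm.2 (norm_normalize hx))
    _ ≤ K * (2 / ‖x‖ * ‖y - x‖) := by gcongr; exact norm_normalize_sub_normalize_le hx y
    _ = 2 * K / ‖x‖ * ‖y - x‖ := by ring

end IsPosHomogeneousZero

theorem time_one_flow_displacement_estimate_general {Y : E → E} {K : ℝ≥0}
    (hY : IsPosHomogeneousZero Y) (hlip : LipschitzOnWith K Y (sphere 0 1)) :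
    ∃ C ≥ (0 : ℝ), ∀ γ : ℝ → E, IsIntegralCurveOn γ (fun _ ↦ Y) (Icc 0 1) →
      (∀ t ∈ Icc (0 : ℝ) 1, γ t ≠ 0) → ‖γ 1 - γ 0 - Y (γ 0)‖ ≤ C / ‖γ 0‖ := by
  obtain ⟨M, hM0, hM⟩ :=
    hY.exists_norm_le (isBounded_image_of_lipschitzOnWith hlip isBounded_sphere)
  refine ⟨K * M, by positivity, fun γ hγ hne ↦ ?_⟩
  have hne0 : γ 0 ≠ 0 := hne 0 (left_mem_Icc.2 zero_le_one)
  have heuler := norm_euler_step_error_le zero_le_one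
    (by positivity : 0 ≤ 2 * K / ‖γ 0‖) hγ (fun t ht ↦ hM _ (hne t ht))
    (fun t ht ↦ hY.norm_sub_le hlip hne0 (hne t ht))
  calc ‖γ 1 - γ 0 - Y (γ 0)‖ ≤ 2 * K / ‖γ 0‖ * M * (1 - 0) ^ 2 / 2 := by
        simpa only [sub_zero, one_smul] using heuler
    _ = K * M / ‖γ 0‖ := by ring

end

/-- The time-1 flow map of a `C¹`, positively homogeneous of degree zero vector field `Y`
on `ℝ² ∖ {0}` displaces a distant point `x` by `Y(x)` up to an error of order `1/‖x‖`:
there exist `C ≥ 0` and `δ > 0` with `‖φ(1, x) - x - Y(x)‖ ≤ C/‖x‖` whenever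
`‖x‖ ≥ 1/δ`. -/
theorem time_one_flow_displacement_estimate
    (Y : EuclideanSpace ℝ (Fin 2) → EuclideanSpace ℝ (Fin 2))
    (hhom : ∀ c : ℝ, 0 < c → ∀ x : EuclideanSpace ℝ (Fin 2), x ≠ 0 → Y (c • x) = Y x)
    (hC1 : ContDiffOn ℝ 1 Y {(0 : EuclideanSpace ℝ (Fin 2))}ᶜ)
    (φ : ℝ → EuclideanSpace ℝ (Fin 2) → EuclideanSpace ℝ (Fin 2))
    (hφ0 : ∀ x : EuclideanSpace ℝ (Fin 2), x ≠ 0 → φ 0 x = x)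
    (hne : ∀ x : EuclideanSpace ℝ (Fin 2), x ≠ 0 → ∀ t : ℝ, φ t x ≠ 0)
    (hderiv : ∀ x : EuclideanSpace ℝ (Fin 2), x ≠ 0 → ∀ t : ℝ,
      HasDerivAt (fun s => φ s x) (Y (φ t x)) t) :
    ∃ C ≥ (0 : ℝ), ∃ δ > (0 : ℝ), ∀ x : EuclideanSpace ℝ (Fin 2), 1 / δ ≤ ‖x‖ →
      ‖φ 1 x - x - Y x‖ ≤ C / ‖x‖ := by
  obtain ⟨K, hK⟩ := exists_lipschitzOnWith_of_contDiffOn_of_isCompact hC1 isOpen_compl_singleton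
    (isCompact_sphere 0 1) fun u hu ↦ Metric.ne_of_mem_sphere hu one_ne_zero
  obtain ⟨C, hC, hest⟩ := time_one_flow_displacement_estimate_general hhom hK
  refine ⟨C, hC, 1, one_pos, fun x hx ↦ ?_⟩
  have hx0 : x ≠ 0 := norm_pos_iff.1 (by linarith)
  simpa only [hφ0 x hx0] using hest (φ · x)
    (IsIntegralCurve.isIntegralCurveOn (hderiv x hx0) _) fun t _ ↦ hne x hx0 t
end
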